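/- arXiv:2311.01407 — 2 statements merged into one kernel-verified Lean document; each statement's English description precedes it below -/
import Mathlib

section
/- (Reaction-term estimate used for the infinite-time decay.) One has R₁ ≤ 3|h̊|²|A⁻|² + (3/2)|A⁻|⁴ + (|h̊|² + |H|²/m)|A|² − (1/m)|A⁻|²|H|². -/
/-!
Put `a = |h̊|²`, `b = |A⁻|²`, `c = |H|²/m`. Since `‖A_0‖² = a + c`, the right-hand side equals
`(a + c)² + 4ab + (3/2) b²`, and the left-hand side splits into the `(0,0)` term `(a + c)²`, the
mixed terms, and the terms with both indices `≥ 1`.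

* In the mixed terms, `A_0` may be replaced by `h̊`, because `A_α` is traceless and `Id` commutes
  with everything. Each mixed term is then at most `2 a ‖A_α‖²`
  (`trace_sq_add_comm_le`: diagonalise one of the two matrices).
* The remaining terms are at most `(3/2) b²`; this is the inequality of A.-M. Li and J. Li
  (`li_li`). A rotation of the family makes the matrices `B_α` pairwise orthogonal. For pairwise
  orthogonal matrices, `three_halves_unique` says that for each `α` at most one `β ≠ α` satisfies
  `‖[B_α, B_β]‖² > (3/2) ‖B_α‖² ‖B_β‖²`, so these exceptional pairs form a matching. An exceptional
  pair exceeds its budget by at most `(1/2) ‖B_α‖² ‖B_β‖² ≤ (1/4) (‖B_α‖⁴ + ‖B_β‖⁴)`, and the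
  surplus `(1/2) ‖B_α‖⁴` of the diagonal terms pays for it.

The uniqueness comes from `comm_pair_le`: for `B ⟂ C` of norm one,
`‖[A,B]‖² + ‖[A,C]‖² ≤ 3 ‖A‖²`. With `A` diagonal with entries `d_i`, the left side is a weighted sum
of the `(d_i - d_j)²` over pairs `i < j`, with weights at most `1` (Bessel) and total weight at most
`2`, while any two of the quantities `(d_i - d_j)²` add up to at most `3 ‖A‖²`.
-/

open Finset

/-- Squared Frobenius norm of a real matrix. -/
def frobSq {m : ℕ} (M : Matrix (Fin m) (Fin m) ℝ) : ℝ := ∑ i, ∑ j, (M i j) ^ 2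

/-- The reaction term `R₁ = Σ_{α,β} (tr(A_α A_β))² + Σ_{α,β} ‖A_α A_β − A_β A_α‖²`. -/
def reactionR1 {m k : ℕ} (A : Fin k → Matrix (Fin m) (Fin m) ℝ) : ℝ :=
  (∑ α, ∑ β, (Matrix.trace (A α * A β)) ^ 2)
    + ∑ α, ∑ β, frobSq (A α * A β - A β * A α)

/-- The traceless part `h̊ = A_0 − (|H|/m)·Id` of the second fundamental form in the
principal direction. -/
noncomputable def tracelessh {m k : ℕ} (hk : 0 < k)
    (A : Fin k → Matrix (Fin m) (Fin m) ℝ) (H : ℝ) : Matrix (Fin m) (Fin m) ℝ :=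
  A ⟨0, hk⟩ - (H / (m : ℝ)) • (1 : Matrix (Fin m) (Fin m) ℝ)

/-- `|A⁻|² = Σ_{α ≥ 1} ‖A_α‖²`. -/
def AminusSq {m k : ℕ} (hk : 0 < k) (A : Fin k → Matrix (Fin m) (Fin m) ℝ) : ℝ :=
  ∑ α ∈ Finset.univ.erase ⟨0, hk⟩, frobSq (A α)

open Matrix

section frobenius

variable {m : ℕ}

/-! ### Frobenius norm, conjugation and diagonalisation -/

lemma frobSq_nonneg (M : Matrix (Fin m) (Fin m) ℝ) : 0 ≤ frobSq M :=
  sum_nonneg fun _ _ => sum_nonneg fun _ _ => sq_nonneg _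

lemma frobSq_eq_trace (M : Matrix (Fin m) (Fin m) ℝ) : frobSq M = (Mᵀ * M).trace := by
  simp only [frobSq, trace, diag_apply, mul_apply, transpose_apply]
  rw [sum_comm]
  exact sum_congr rfl fun _ _ => sum_congr rfl fun _ _ => by ring

lemma frobSq_symm {M : Matrix (Fin m) (Fin m) ℝ} (h : M.IsSymm) :
    frobSq M = (M * M).trace := by
  rw [frobSq_eq_trace, h.eq]

lemma frobSq_conj (U M : Matrix (Fin m) (Fin m) ℝ) (hU : U * Uᵀ = 1) :
    frobSq (Uᵀ * M * U) = frobSq M := by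
  rw [frobSq_eq_trace, frobSq_eq_trace]
  have : (Uᵀ * M * U)ᵀ * (Uᵀ * M * U) = Uᵀ * (Mᵀ * M * U) := by
    simp only [transpose_mul, transpose_transpose]
    calc Uᵀ * (Mᵀ * U) * (Uᵀ * M * U) = Uᵀ * (Mᵀ * (U * Uᵀ) * M * U) := by
          simp only [Matrix.mul_assoc]
      _ = _ := by rw [hU, Matrix.mul_one]
  rw [this, trace_mul_comm, Matrix.mul_assoc, hU, Matrix.mul_one]

lemma conj_mul_conj (U M N : Matrix (Fin m) (Fin m) ℝ) (hU : U * Uᵀ = 1) :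
    (Uᵀ * M * U) * (Uᵀ * N * U) = Uᵀ * (M * N) * U := by
  calc (Uᵀ * M * U) * (Uᵀ * N * U) = Uᵀ * (M * (U * Uᵀ) * N) * U := by
        simp only [Matrix.mul_assoc]
    _ = _ := by rw [hU, Matrix.mul_one]

lemma trace_conj (U M : Matrix (Fin m) (Fin m) ℝ) (hU : U * Uᵀ = 1) :
    (Uᵀ * M * U).trace = M.trace := by
  rw [trace_mul_comm, ← Matrix.mul_assoc, hU, Matrix.one_mul]

lemma comm_conj (U M N : Matrix (Fin m) (Fin m) ℝ) (hU : U * Uᵀ = 1) :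
    frobSq ((Uᵀ * M * U) * (Uᵀ * N * U) - (Uᵀ * N * U) * (Uᵀ * M * U))
      = frobSq (M * N - N * M) := by
  rw [conj_mul_conj U M N hU, conj_mul_conj U N M hU, ← frobSq_conj U (M * N - N * M) hU,
    Matrix.mul_sub, Matrix.sub_mul]

lemma isSymm_conj (U : Matrix (Fin m) (Fin m) ℝ) {M : Matrix (Fin m) (Fin m) ℝ} (h : M.IsSymm) :
    (Uᵀ * M * U).IsSymm := by
  simp [Matrix.IsSymm, transpose_mul, h.eq, Matrix.mul_assoc]

/-- Orthogonal diagonalisation of a real symmetric matrix. -/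
lemma exists_diag {M : Matrix (Fin m) (Fin m) ℝ} (h : M.IsSymm) :
    ∃ (U : Matrix (Fin m) (Fin m) ℝ) (d : Fin m → ℝ),
      U * Uᵀ = 1 ∧ Uᵀ * M * U = diagonal d := by
  have hM : M.IsHermitian := by
    rw [Matrix.IsHermitian, conjTranspose_eq_transpose_of_trivial, h.eq]
  have hU := (mem_unitaryGroup_iff).1 hM.eigenvectorUnitary.2
  have hU' := (mem_unitaryGroup_iff').1 hM.eigenvectorUnitary.2
  have hs := hM.spectral_theorem
  rw [Unitary.conjStarAlgAut_apply] at hs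
  rw [star_eq_conjTranspose, conjTranspose_eq_transpose_of_trivial] at hU hU'
  refine ⟨hM.eigenvectorUnitary.1, hM.eigenvalues, hU, ?_⟩
  have e : (star (hM.eigenvectorUnitary : Matrix (Fin m) (Fin m) ℝ))
      = (hM.eigenvectorUnitary : Matrix (Fin m) (Fin m) ℝ)ᵀ := by
    rw [star_eq_conjTranspose, conjTranspose_eq_transpose_of_trivial]
  rw [e] at hs
  set U : Matrix (Fin m) (Fin m) ℝ := hM.eigenvectorUnitary.1
  have hd : (RCLike.ofReal ∘ hM.eigenvalues : Fin m → ℝ) = hM.eigenvalues := by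
    ext i; simp
  rw [hd] at hs
  generalize hM.eigenvalues = d at hs
  rw [hs]
  calc Uᵀ * (U * diagonal d * Uᵀ) * U = (Uᵀ * U) * diagonal d * (Uᵀ * U) := by
        simp only [Matrix.mul_assoc]
    _ = _ := by rw [hU', Matrix.one_mul, Matrix.mul_one]

lemma frobSq_diagonal (d : Fin m → ℝ) : frobSq (diagonal d) = ∑ i, d i ^ 2 := by
  simp [frobSq, diagonal_apply, ite_pow]

lemma frobSq_comm_diagonal (d : Fin m → ℝ) (B : Matrix (Fin m) (Fin m) ℝ) :
    frobSq (diagonal d * B - B * diagonal d) = ∑ i, ∑ j, (d i - d j) ^ 2 * B i j ^ 2 := by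
  simp only [frobSq, Matrix.sub_apply, diagonal_mul, mul_diagonal]
  exact sum_congr rfl fun _ _ => sum_congr rfl fun _ _ => by ring

lemma frobSq_comm_swap (A B : Matrix (Fin m) (Fin m) ℝ) :
    frobSq (A * B - B * A) = frobSq (B * A - A * B) := by
  simp only [frobSq, Matrix.sub_apply]
  exact sum_congr rfl fun _ _ => sum_congr rfl fun _ _ => by ring

lemma sq_add_sq_le_sum (d : Fin m → ℝ) {i j : Fin m} (h : i ≠ j) :
    d i ^ 2 + d j ^ 2 ≤ ∑ i, d i ^ 2 := by
  rw [← sum_pair (f := fun i => d i ^ 2) h]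
  exact sum_le_univ_sum_of_nonneg fun _ => sq_nonneg _

/-! ### Commutator estimates -/

/-- The estimate for the mixed terms; it contains the inequality
`‖[A,B]‖² ≤ 2 ‖A‖² ‖B‖²` of Chern, do Carmo and Kobayashi. -/
lemma trace_sq_add_comm_le {A : Matrix (Fin m) (Fin m) ℝ} (hA : A.IsSymm)
    (B : Matrix (Fin m) (Fin m) ℝ) :
    (A * B).trace ^ 2 + frobSq (A * B - B * A) ≤ 2 * frobSq A * frobSq B := by
  obtain ⟨U, d, hU, hd⟩ := exists_diag hA
  rw [← comm_conj U A B hU, ← trace_conj U (A * B) hU, ← conj_mul_conj U A B hU,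
    ← frobSq_conj U A hU, ← frobSq_conj U B hU, hd]
  generalize Uᵀ * B * U = B
  rw [frobSq_comm_diagonal, frobSq_diagonal]
  set a := ∑ i, d i ^ 2 with ha
  have htr : (diagonal d * B).trace = ∑ i, d i * B i i := by
    simp [trace, diagonal_mul]
  have h1 : (∑ i, d i * B i i) ^ 2 ≤ a * ∑ i, B i i ^ 2 := sum_mul_sq_le_sq_mul_sq _ _ _
  have ha0 : 0 ≤ a := sum_nonneg fun _ _ => sq_nonneg _
  have h2 : a * ∑ i, B i i ^ 2 + ∑ i, ∑ j, (d i - d j) ^ 2 * B i j ^ 2 ≤ 2 * a * frobSq B := by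
    rw [frobSq, mul_sum, mul_sum, ← sum_add_distrib]
    refine sum_le_sum fun i _ => ?_
    have : a * B i i ^ 2 = ∑ j, if i = j then a * B i j ^ 2 else 0 := by simp
    rw [this, ← sum_add_distrib, mul_sum]
    refine sum_le_sum fun j _ => ?_
    split_ifs with h
    · subst h
      nlinarith [mul_nonneg ha0 (sq_nonneg (B i i))]
    · have := sq_add_sq_le_sum d h
      rw [zero_add]
      exact mul_le_mul_of_nonneg_right (by nlinarith [sq_nonneg (d i + d j)]) (sq_nonneg _)
  rw [htr]
  linarith

lemma three_sq_le_sum (d : Fin m → ℝ) {i j l : Fin m} (hij : i ≠ j) (hil : i ≠ l) (hjl : j ≠ l) :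
    (d i - d j) ^ 2 + (d i - d l) ^ 2 ≤ 3 * ∑ i, d i ^ 2 := by
  have h : ∑ x ∈ {i, j, l}, d x ^ 2 ≤ ∑ x, d x ^ 2 :=
    sum_le_univ_sum_of_nonneg fun _ => sq_nonneg _
  rw [sum_insert (by simp [hij, hil]), sum_pair hjl] at h
  nlinarith [sq_nonneg (d i + d j + d l), sq_nonneg (d j - d l)]

/-- Two different unordered pairs of indices. If they share an index, the constant `3` is the largest
Laplacian eigenvalue of a path with two edges; if they are disjoint, `2` would do. -/
lemma sq_sub_add_sq_sub_le (d : Fin m → ℝ) {i j k l : Fin m} (hij : i ≠ j) (hkl : k ≠ l)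
    (h1 : ¬ (i = k ∧ j = l)) (h2 : ¬ (i = l ∧ j = k)) :
    (d i - d j) ^ 2 + (d k - d l) ^ 2 ≤ 3 * ∑ i, d i ^ 2 := by
  by_cases hik : i = k
  · subst hik
    exact three_sq_le_sum d hij hkl (by tauto)
  by_cases hil : i = l
  · subst hil
    have := three_sq_le_sum d hij (Ne.symm hkl) (by tauto)
    linarith [sub_sq_comm (d k) (d i)]
  by_cases hjk : j = k
  · subst hjk
    have := three_sq_le_sum d (Ne.symm hij) hkl hil
    linarith [sub_sq_comm (d i) (d j)]
  by_cases hjl : j = l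
  · subst hjl
    have := three_sq_le_sum d (Ne.symm hij) (Ne.symm hkl) hik
    linarith [sub_sq_comm (d i) (d j), sub_sq_comm (d k) (d j)]
  have h : ∑ x ∈ {i, j, k, l}, d x ^ 2 ≤ ∑ x, d x ^ 2 :=
    sum_le_univ_sum_of_nonneg fun _ => sq_nonneg _
  rw [sum_insert (by simp [hij, hik, hil]), sum_insert (by simp [hjk, hjl]), sum_pair hkl] at h
  nlinarith [sq_nonneg (d i + d j), sq_nonneg (d k + d l), sq_nonneg (d i), sq_nonneg (d j),
    sq_nonneg (d k), sq_nonneg (d l)]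

/-- Bessel's inequality for an off-diagonal coordinate of two orthogonal symmetric matrices, with
denominators cleared: for `‖B‖ = ‖C‖ = 1` it reads `2 (B_pq² + C_pq²) ≤ 1`. -/
lemma bessel_entry {B C : Matrix (Fin m) (Fin m) ℝ} (hB : B.IsSymm) (hC : C.IsSymm)
    (hBC : (B * C).trace = 0) {p q : Fin m} (hpq : p ≠ q) :
    2 * (frobSq C * B p q ^ 2 + frobSq B * C p q ^ 2) ≤ frobSq B * frobSq C := by
  set y := frobSq B with hy
  set z := frobSq C with hz
  have hy0 : 0 ≤ y := frobSq_nonneg B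
  have hz0 : 0 ≤ z := frobSq_nonneg C
  set t := z * B p q ^ 2 + y * C p q ^ 2 with ht
  have ht0 : 0 ≤ t := by positivity
  -- `X` is a multiple of the projection of the `(p,q)` coordinate vector onto the span of `B`, `C`.
  set X : Matrix (Fin m) (Fin m) ℝ := (z * B p q) • B + (y * C p q) • C with hX
  have hXs : X.IsSymm := by
    simp [Matrix.IsSymm, hX, transpose_add, transpose_smul, hB.eq, hC.eq]
  have hnorm : frobSq X = y * z * t := by
    have hCB : (C * B).trace = 0 := by rw [trace_mul_comm, hBC]
    rw [frobSq_symm hXs, hX]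
    simp only [Matrix.add_mul, Matrix.mul_add, Matrix.smul_mul, Matrix.mul_smul, trace_add, trace_smul,
      smul_eq_mul, hBC, hCB, ← frobSq_symm hB, ← frobSq_symm hC, ← hy, ← hz, ht]
    ring
  have hXpq : X p q = t := by
    simp only [hX, Matrix.add_apply, Matrix.smul_apply, smul_eq_mul, ht]; ring
  have hXqp : X q p = t := by rw [← hXs.apply q p, hXpq]
  have hle : 2 * t ^ 2 ≤ frobSq X := by
    have h1 : ∑ i ∈ {p, q}, ∑ j, X i j ^ 2 ≤ frobSq X :=
      sum_le_univ_sum_of_nonneg fun _ => sum_nonneg fun _ _ => sq_nonneg _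
    rw [sum_pair hpq] at h1
    have h2 : X p q ^ 2 ≤ ∑ j, X p j ^ 2 :=
      single_le_sum (f := fun j => X p j ^ 2) (fun _ _ => sq_nonneg _) (mem_univ q)
    have h3 : X q p ^ 2 ≤ ∑ j, X q j ^ 2 :=
      single_le_sum (f := fun j => X q j ^ 2) (fun _ _ => sq_nonneg _) (mem_univ p)
    rw [hXpq] at h2
    rw [hXqp] at h3
    linarith
  rw [hnorm] at hle
  rcases ht0.eq_or_lt with h | h
  · rw [← h]; nlinarith [mul_nonneg hy0 hz0]
  · nlinarith

/-- For orthogonal symmetric `B`, `C`, with denominators cleared: for `‖B‖ = ‖C‖ = 1` it reads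
`‖[A,B]‖² + ‖[A,C]‖² ≤ 3 ‖A‖²`. -/
lemma comm_pair_le {A B C : Matrix (Fin m) (Fin m) ℝ} (hA : A.IsSymm) (hB : B.IsSymm)
    (hC : C.IsSymm) (hBC : (B * C).trace = 0) :
    frobSq C * frobSq (A * B - B * A) + frobSq B * frobSq (A * C - C * A)
      ≤ 3 * frobSq A * (frobSq B * frobSq C) := by
  obtain ⟨U, d, hU, hd⟩ := exists_diag hA
  rw [← comm_conj U A B hU, ← comm_conj U A C hU,
    ← frobSq_conj U A hU, ← frobSq_conj U B hU, ← frobSq_conj U C hU, hd]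
  rw [← trace_conj U (B * C) hU, ← conj_mul_conj U B C hU] at hBC
  replace hB := isSymm_conj U hB
  replace hC := isSymm_conj U hC
  generalize Uᵀ * B * U = B at *
  generalize Uᵀ * C * U = C at *
  rw [frobSq_comm_diagonal, frobSq_comm_diagonal, frobSq_diagonal]
  have hbes := fun p q hpq => bessel_entry hB hC hBC (p := p) (q := q) hpq
  have hy0 : 0 ≤ frobSq B := frobSq_nonneg B
  have hz0 : 0 ≤ frobSq C := frobSq_nonneg C
  set a := ∑ i, d i ^ 2 with ha
  have ha0 : 0 ≤ a := sum_nonneg fun _ _ => sq_nonneg _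
  let W : Fin m → Fin m → ℝ := fun i j => frobSq C * B i j ^ 2 + frobSq B * C i j ^ 2
  have hW0 : ∀ i j, 0 ≤ W i j := fun i j => by positivity
  have hWs : ∀ i j, W i j = W j i := fun i j => by
    simp only [W]; rw [hB.apply i j, hC.apply i j]
  have hWsum : ∑ i, ∑ j, W i j = 2 * (frobSq B * frobSq C) := by
    simp only [W, sum_add_distrib, ← mul_sum]
    change frobSq C * frobSq B + frobSq B * frobSq C = _
    ring
  have hL : frobSq C * ∑ i, ∑ j, (d i - d j) ^ 2 * B i j ^ 2
      + frobSq B * ∑ i, ∑ j, (d i - d j) ^ 2 * C i j ^ 2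
      = ∑ i, ∑ j, W i j * (d i - d j) ^ 2 := by
    simp only [W, mul_sum, ← sum_add_distrib]
    exact sum_congr rfl fun _ _ => sum_congr rfl fun _ _ => by ring
  rw [hL]
  by_cases hall : ∀ i j, (d i - d j) ^ 2 ≤ 3 / 2 * a
  · calc ∑ i, ∑ j, W i j * (d i - d j) ^ 2 ≤ ∑ i, ∑ j, W i j * (3 / 2 * a) :=
          sum_le_sum fun i _ => sum_le_sum fun j _ =>
            mul_le_mul_of_nonneg_left (hall i j) (hW0 i j)
      _ = _ := by simp only [← sum_mul, hWsum]; ring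
  push Not at hall
  obtain ⟨p, q, hpq⟩ := hall
  have hne : p ≠ q := by
    rintro rfl
    simp at hpq
    linarith
  -- The pair `{p, q}` is the only one whose value exceeds `3a/2`; the others are at most `r`.
  set D := (d p - d q) ^ 2 with hD
  set r := 3 * a - D with hr
  have hr0 : 0 ≤ r := by
    have := sq_add_sq_le_sum d hne
    nlinarith [sq_nonneg (d p + d q)]
  have hpt : ∀ i j, W i j * (d i - d j) ^ 2 ≤ W i j * r
      + (if i = p then (if j = q then W p q * (D - r) else 0) else 0)
      + (if i = q then (if j = p then W p q * (D - r) else 0) else 0) := by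
    intro i j
    by_cases h1 : i = p ∧ j = q
    · obtain ⟨rfl, rfl⟩ := h1
      simp only [if_true, hne, if_false]
      rw [← hD]; linarith
    by_cases h2 : i = q ∧ j = p
    · obtain ⟨rfl, rfl⟩ := h2
      simp only [if_true, hne.symm, if_false]
      rw [hWs i j, sub_sq_comm, ← hD]; linarith
    have e1 : (if i = p then (if j = q then W p q * (D - r) else 0) else 0) = 0 := by
      rw [← ite_and, if_neg h1]
    have e2 : (if i = q then (if j = p then W p q * (D - r) else 0) else 0) = 0 := by
      rw [← ite_and, if_neg h2]
    rw [e1, e2, add_zero, add_zero]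
    refine mul_le_mul_of_nonneg_left ?_ (hW0 i j)
    by_cases hij : i = j
    · subst hij; simpa using hr0
    · have := sq_sub_add_sq_sub_le d hij hne h1 h2
      linarith
  calc ∑ i, ∑ j, W i j * (d i - d j) ^ 2 ≤ _ :=
        sum_le_sum fun i _ => sum_le_sum fun j _ => hpt i j
    _ = 2 * (frobSq B * frobSq C) * r + W p q * (D - r) + W p q * (D - r) := by
        simp only [sum_add_distrib, ← sum_mul, hWsum]
        congr 1
        · congr 1
          rw [sum_eq_single p (by intro b _ hb; simp [hb]) (by simp)]
          simp
        · rw [sum_eq_single q (by intro b _ hb; simp [hb]) (by simp)]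
          simp
    _ ≤ 3 * a * (frobSq B * frobSq C) := by
        have h := hbes p q hne
        have hDr : 0 ≤ D - r := by linarith
        have : 2 * W p q * (D - r) ≤ frobSq B * frobSq C * (D - r) :=
          mul_le_mul_of_nonneg_right h hDr
        rw [hr] at *
        nlinarith

lemma three_halves_unique {A B C : Matrix (Fin m) (Fin m) ℝ} (hA : A.IsSymm) (hB : B.IsSymm)
    (hC : C.IsSymm) (hBC : (B * C).trace = 0)
    (h1 : 3 / 2 * (frobSq A * frobSq B) < frobSq (A * B - B * A))
    (h2 : 3 / 2 * (frobSq A * frobSq C) < frobSq (A * C - C * A)) : False := by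
  have h := comm_pair_le hA hB hC hBC
  -- `B` and `C` are nonzero, since otherwise the commutators would vanish.
  have pos : ∀ M, 3 / 2 * (frobSq A * frobSq M) < frobSq (A * M - M * A) → 0 < frobSq M := by
    intro M hM
    have h3 := trace_sq_add_comm_le hA M
    refine (frobSq_nonneg M).lt_of_ne fun h0 => ?_
    rw [← h0] at h3 hM
    nlinarith [sq_nonneg (A * M).trace]
  have hB0 := pos B h1
  have hC0 := pos C h2
  nlinarith [mul_lt_mul_of_pos_left h1 hC0, mul_lt_mul_of_pos_left h2 hB0]

/-! ### The Li–Li inequality for orthogonal families -/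

/-- The Li–Li inequality for pairwise orthogonal matrices. -/
lemma li_li_orthogonal {k : ℕ} (B : Fin k → Matrix (Fin m) (Fin m) ℝ)
    (hB : ∀ α, (B α).IsSymm) (horth : ∀ α β, α ≠ β → (B α * B β).trace = 0) :
    reactionR1 B ≤ 3 / 2 * (∑ α, frobSq (B α)) ^ 2 := by
  classical
  set x : Fin k → ℝ := fun α => frobSq (B α) with hx
  have hx0 : ∀ α, 0 ≤ x α := fun α => frobSq_nonneg _
  let P : Fin k → Fin k → Prop := fun α β =>
    α ≠ β ∧ 3 / 2 * (x α * x β) < frobSq (B α * B β - B β * B α)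
  have hPs : ∀ α β, P α β → P β α := fun α β h => by
    refine ⟨h.1.symm, ?_⟩
    rw [frobSq_comm_swap, mul_comm (x β)]; exact h.2
  have hPu : ∀ α β γ, P α β → P α γ → β = γ := by
    intro α β γ h1 h2
    by_contra hne
    exact three_halves_unique (hB α) (hB β) (hB γ) (horth β γ hne) h1.2 h2.2
  -- The diagonal terms leave a surplus, which pays for the excess on the pairs in `P`.
  have hpt : ∀ α β, (B α * B β).trace ^ 2 + frobSq (B α * B β - B β * B α)
      ≤ 3 / 2 * (x α * x β) - (if α = β then x α ^ 2 / 2 else 0)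
        + (if P α β then x α ^ 2 / 4 else 0) + (if P α β then x β ^ 2 / 4 else 0) := by
    intro α β
    by_cases h : α = β
    · subst h
      have hn : ¬ P α α := fun h => h.1 rfl
      simp only [if_true, hn, if_false, sub_self]
      rw [← frobSq_symm (hB α)]
      have : frobSq (0 : Matrix (Fin m) (Fin m) ℝ) = 0 := by simp [frobSq]
      rw [this]
      change x α ^ 2 + 0 ≤ _
      linarith
    · rw [horth α β h]
      by_cases hP : P α β
      · simp only [h, hP, if_true, if_false]
        have := trace_sq_add_comm_le (hB α) (B β)
        rw [horth α β h] at this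
        change _ ≤ 2 * x α * x β at this
        nlinarith [sq_nonneg (x α - x β)]
      · simp only [h, hP, if_false]
        have : ¬ 3 / 2 * (x α * x β) < frobSq (B α * B β - B β * B α) := fun h' => hP ⟨h, h'⟩
        linarith
  have hrow : ∀ α, ∑ β, (if P α β then x α ^ 2 / 4 else 0) ≤ x α ^ 2 / 4 := by
    intro α
    by_cases hex : ∃ β, P α β
    · obtain ⟨β, hβ⟩ := hex
      rw [sum_eq_single β (fun γ _ hγ => if_neg fun h => hγ (hPu α γ β h hβ)) (by simp),
        if_pos hβ]
    · push Not at hex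
      rw [sum_eq_zero fun β _ => if_neg (hex β)]
      positivity
  have hcol : ∑ α, ∑ β, (if P α β then x β ^ 2 / 4 else 0)
      = ∑ α, ∑ β, (if P α β then x α ^ 2 / 4 else 0) := by
    rw [sum_comm]
    refine sum_congr rfl fun α _ => sum_congr rfl fun β _ => ?_
    exact if_congr ⟨hPs _ _, hPs _ _⟩ rfl rfl
  have hsum : ∑ α, ∑ β, (if P α β then x α ^ 2 / 4 else 0) ≤ ∑ α, x α ^ 2 / 4 :=
    sum_le_sum fun α _ => hrow α
  have hquarter : ∑ α, x α ^ 2 / 2 = 2 * ∑ α, x α ^ 2 / 4 := by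
    rw [mul_sum]; exact sum_congr rfl fun _ _ => by ring
  have hsq : ∑ α, ∑ β, 3 / 2 * (x α * x β) = 3 / 2 * (∑ α, x α) ^ 2 := by
    simp only [← mul_sum, sq, sum_mul_sum]
  rw [reactionR1]
  simp only [← sum_add_distrib]
  refine (sum_le_sum fun α _ => sum_le_sum fun β _ => hpt α β).trans ?_
  simp only [sum_add_distrib, sum_sub_distrib, hcol, hsq]
  simp only [sum_ite_eq, mem_univ, if_true]
  linarith

/-! ### The Li–Li inequality for arbitrary families -/

/-- The family `B_β` mixed by the columns of `U`; a change of orthonormal normal frame when `U` is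
orthogonal. -/
def rotate {k : ℕ} (U : Matrix (Fin k) (Fin k) ℝ) (B : Fin k → Matrix (Fin m) (Fin m) ℝ)
    (α : Fin k) : Matrix (Fin m) (Fin m) ℝ := ∑ β, U β α • B β

lemma rotate_mul {k : ℕ} (U : Matrix (Fin k) (Fin k) ℝ) (B : Fin k → Matrix (Fin m) (Fin m) ℝ)
    (α β : Fin k) :
    rotate U B α * rotate U B β = ∑ γ, ∑ δ, (U γ α * U δ β) • (B γ * B δ) := by
  simp only [rotate, sum_mul_sum, Matrix.smul_mul, Matrix.mul_smul, smul_smul]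
  exact sum_congr rfl fun _ _ => sum_congr rfl fun _ _ => by rw [mul_comm]

lemma conj_apply {k : ℕ} (U M : Matrix (Fin k) (Fin k) ℝ) (α β : Fin k) :
    (Uᵀ * M * U) α β = ∑ γ, ∑ δ, (U γ α * U δ β) * M γ δ := by
  simp only [mul_apply, transpose_apply, sum_mul]
  rw [sum_comm]
  exact sum_congr rfl fun _ _ => sum_congr rfl fun _ _ => by ring

/-- The Gram matrix of a family of symmetric matrices for the Frobenius inner product. -/
def gramMatrix {k : ℕ} (B : Fin k → Matrix (Fin m) (Fin m) ℝ) : Matrix (Fin k) (Fin k) ℝ :=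
  Matrix.of fun α β => (B α * B β).trace

/-- The `(i,j)` entries of all the commutators of a family. -/
def commEntry {k : ℕ} (B : Fin k → Matrix (Fin m) (Fin m) ℝ) (i j : Fin m) :
    Matrix (Fin k) (Fin k) ℝ :=
  Matrix.of fun α β => (B α * B β - B β * B α) i j

lemma gramMatrix_rotate {k : ℕ} (U : Matrix (Fin k) (Fin k) ℝ)
    (B : Fin k → Matrix (Fin m) (Fin m) ℝ) : gramMatrix (rotate U B) = Uᵀ * gramMatrix B * U := by
  ext α β
  rw [conj_apply]
  simp only [gramMatrix, of_apply, rotate_mul, trace_sum, trace_smul, smul_eq_mul]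

lemma commEntry_rotate {k : ℕ} (U : Matrix (Fin k) (Fin k) ℝ)
    (B : Fin k → Matrix (Fin m) (Fin m) ℝ) (i j : Fin m) :
    commEntry (rotate U B) i j = Uᵀ * commEntry B i j * U := by
  ext α β
  rw [conj_apply]
  have : rotate U B β * rotate U B α = ∑ γ, ∑ δ, (U γ α * U δ β) • (B δ * B γ) := by
    rw [rotate_mul, sum_comm]
    exact sum_congr rfl fun _ _ => sum_congr rfl fun _ _ => by rw [mul_comm (U _ _)]
  simp only [commEntry, of_apply, rotate_mul U B α β, this, Matrix.sub_apply, Matrix.sum_apply,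
    Matrix.smul_apply, smul_eq_mul, ← sum_sub_distrib, mul_sub]

lemma reactionR1_eq {k : ℕ} (B : Fin k → Matrix (Fin m) (Fin m) ℝ) :
    reactionR1 B = frobSq (gramMatrix B) + ∑ i, ∑ j, frobSq (commEntry B i j) := by
  rw [reactionR1]
  congr 1
  simp only [frobSq, commEntry, of_apply]
  calc _ = ∑ α, ∑ i, ∑ β, ∑ j, ((B α * B β - B β * B α) i j) ^ 2 :=
        sum_congr rfl fun _ _ => sum_comm
    _ = ∑ i, ∑ α, ∑ j, ∑ β, ((B α * B β - B β * B α) i j) ^ 2 := by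
        rw [sum_comm]
        exact sum_congr rfl fun _ _ => sum_congr rfl fun _ _ => sum_comm
    _ = _ := sum_congr rfl fun _ _ => sum_comm

/-- The Li–Li inequality: both sides are invariant under rotations of the family, and the rotation
that diagonalises the Gram matrix makes the family orthogonal. -/
lemma li_li {k : ℕ} (B : Fin k → Matrix (Fin m) (Fin m) ℝ) (hB : ∀ α, (B α).IsSymm) :
    reactionR1 B ≤ 3 / 2 * (∑ α, frobSq (B α)) ^ 2 := by
  have hG : (gramMatrix B).IsSymm := by
    ext α β
    simp only [gramMatrix, transpose_apply, of_apply]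
    exact trace_mul_comm _ _
  obtain ⟨U, d, hU, hd⟩ := exists_diag hG
  have hsymm : ∀ α, (rotate U B α).IsSymm := fun α => by
    simp only [Matrix.IsSymm, rotate, transpose_sum, transpose_smul]
    exact sum_congr rfl fun β _ => by rw [(hB β).eq]
  have horth : ∀ α β, α ≠ β → (rotate U B α * rotate U B β).trace = 0 := by
    intro α β h
    change gramMatrix (rotate U B) α β = 0
    rw [gramMatrix_rotate, hd, diagonal_apply_ne _ h]
  have key := li_li_orthogonal (rotate U B) hsymm horth
  have hR : reactionR1 (rotate U B) = reactionR1 B := by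
    simp only [reactionR1_eq, gramMatrix_rotate, commEntry_rotate, frobSq_conj _ _ hU]
  have htrace : ∀ C : Fin k → Matrix (Fin m) (Fin m) ℝ, (∀ α, (C α).IsSymm) →
      ∑ α, frobSq (C α) = (gramMatrix C).trace := fun C hC =>
    sum_congr rfl fun α _ => frobSq_symm (hC α)
  rwa [hR, htrace _ hsymm, gramMatrix_rotate, trace_conj _ _ hU, ← htrace _ hB] at key

end frobenius

/-! ### The reaction term -/

/-- **Reaction-term estimate used for the infinite-time decay.**
`R₁ ≤ 3|h̊|²|A⁻|² + (3/2)|A⁻|⁴ + (|h̊|² + |H|²/m)|A|² − (1/m)|A⁻|²|H|²`. -/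
theorem reaction_estimate_infinite_time
    (m k : ℕ) (hm : 2 ≤ m) (hk : 0 < k)
    (A : Fin k → Matrix (Fin m) (Fin m) ℝ)
    (hsymm : ∀ α, (A α).IsSymm)
    (H : ℝ) (hH : 0 < H)
    (htr₀ : (A ⟨0, hk⟩).trace = H)
    (htr : ∀ α, α ≠ ⟨0, hk⟩ → (A α).trace = 0) :
    reactionR1 A
      ≤ 3 * frobSq (tracelessh hk A H) * AminusSq hk A
        + (3 / 2) * (AminusSq hk A) ^ 2
        + (frobSq (tracelessh hk A H) + H ^ 2 / (m : ℝ)) * (∑ α, frobSq (A α))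
        - (1 / (m : ℝ)) * AminusSq hk A * H ^ 2 := by
  have hm0 : (m : ℝ) ≠ 0 := by positivity
  set o : Fin k := ⟨0, hk⟩ with ho
  set h := tracelessh hk A H with hh
  have hhA : h = A o - (H / (m : ℝ)) • (1 : Matrix (Fin m) (Fin m) ℝ) := rfl
  have hhs : h.IsSymm := by
    rw [hhA]
    simp [Matrix.IsSymm, transpose_sub, transpose_smul, (hsymm o).eq]
  have hA0 : frobSq (A o) = frobSq h + H ^ 2 / m := by
    rw [frobSq_symm hhs, frobSq_symm (hsymm o), hhA]
    simp only [Matrix.sub_mul, Matrix.mul_sub, Matrix.smul_mul, Matrix.mul_smul, Matrix.one_mul, Matrix.mul_one,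
      trace_sub, trace_smul, trace_one, htr₀, smul_eq_mul, Fintype.card_fin]
    field_simp
    ring
  have hmix : ∀ α, α ≠ o → (A o * A α).trace ^ 2 + frobSq (A o * A α - A α * A o)
      ≤ 2 * frobSq h * frobSq (A α) := by
    intro α hα
    have e1 : (A o * A α).trace = (h * A α).trace := by
      rw [hhA]
      simp [Matrix.sub_mul, htr α hα]
    have e2 : A o * A α - A α * A o = h * A α - A α * h := by
      rw [hhA]
      simp [Matrix.sub_mul, Matrix.mul_sub]
    rw [e1, e2]
    exact trace_sq_add_comm_le hhs (A α)
  -- Replacing `A_0` by zero turns the sums over indices `≥ 1` into sums over the full index set.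
  set B : Fin k → Matrix (Fin m) (Fin m) ℝ := Function.update A o 0 with hB
  have hBo : B o = 0 := by simp [hB]
  have hBα : ∀ α, α ≠ o → B α = A α := fun α hα => by simp [hB, hα]
  have hBs : ∀ α, (B α).IsSymm := fun α => by
    by_cases hα : α = o
    · rw [hα, hBo]; exact transpose_zero
    · rw [hBα α hα]; exact hsymm α
  have hz : frobSq (0 : Matrix (Fin m) (Fin m) ℝ) = 0 := by simp [frobSq]
  have hLL := li_li B hBs
  have hBsum : ∑ α, frobSq (B α) = AminusSq hk A := by
    rw [← add_sum_erase _ _ (mem_univ o), hBo, hz, zero_add]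
    exact sum_congr rfl fun α hα => by rw [hBα α (ne_of_mem_erase hα)]
  have hAsum : ∑ α, frobSq (A α) = frobSq (A o) + AminusSq hk A :=
    (add_sum_erase _ _ (mem_univ o)).symm
  let F : (Fin k → Matrix (Fin m) (Fin m) ℝ) → Fin k → Fin k → ℝ := fun C α β =>
    (C α * C β).trace ^ 2 + frobSq (C α * C β - C β * C α)
  have hF : ∀ C, reactionR1 C = ∑ α, ∑ β, F C α β := fun C => by
    simp only [reactionR1, F, sum_add_distrib]
  have hFs : ∀ α β, F A α β = F A β α := fun α β => by
    simp only [F]; rw [trace_mul_comm, frobSq_comm_swap]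
  have hsplit : ∀ C, reactionR1 C = F C o o + ∑ β ∈ univ.erase o, F C o β
      + (∑ α ∈ univ.erase o, F C α o + ∑ α ∈ univ.erase o, ∑ β ∈ univ.erase o, F C α β) := by
    intro C
    rw [hF, ← add_sum_erase _ _ (mem_univ o), ← add_sum_erase _ (F C o) (mem_univ o),
      ← sum_add_distrib]
    congr 1
    exact sum_congr rfl fun α _ => (add_sum_erase _ (F C α) (mem_univ o)).symm
  have hFB0 : ∀ α, F B o α = 0 ∧ F B α o = 0 := fun α => by simp [F, hBo, hz]
  have hFBA : ∑ α ∈ univ.erase o, ∑ β ∈ univ.erase o, F B α β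
      = ∑ α ∈ univ.erase o, ∑ β ∈ univ.erase o, F A α β := by
    refine sum_congr rfl fun α hα => sum_congr rfl fun β hβ => ?_
    simp only [F, hBα α (ne_of_mem_erase hα), hBα β (ne_of_mem_erase hβ)]
  have hcross : ∑ β ∈ univ.erase o, F A o β ≤ 2 * frobSq h * AminusSq hk A := by
    rw [AminusSq, mul_sum]
    exact sum_le_sum fun α hα => hmix α (ne_of_mem_erase hα)
  have hcross' : ∑ α ∈ univ.erase o, F A α o = ∑ β ∈ univ.erase o, F A o β :=
    sum_congr rfl fun α _ => hFs α o
  have hoo : F A o o = (frobSq h + H ^ 2 / m) ^ 2 := by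
    simp only [F, sub_self, hz, add_zero]
    rw [← frobSq_symm (hsymm o), hA0]
  rw [hsplit B, hBsum, sum_congr rfl fun α _ => (hFB0 α).1, sum_congr rfl fun α _ => (hFB0 α).2,
    (hFB0 o).1, sum_const_zero, hFBA] at hLL
  rw [hsplit A, hcross', hoo, hAsum, hA0]
  have hid : (frobSq h + H ^ 2 / m) * (frobSq h + H ^ 2 / m + AminusSq hk A)
      - 1 / (m : ℝ) * AminusSq hk A * H ^ 2
      = (frobSq h + H ^ 2 / m) ^ 2 + frobSq h * AminusSq hk A := by
    field_simp
    ring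
  linarith
end

section
/- (Coefficient comparison in the gradient-term estimate.) Let m and k̃ be real numbers with m > k̃ > 0, and set c = 1/(m−k̃). Then the inequality 2 ≤ (m/(mc−1))·(16/(9(m+2)) − c) + (7m−18)/(9(m+2)(mc−1)) holds if and only if k̃ ≤ m(14m−36)/(41m+18). -/
/-! Substituting `c = 1/(m − k̃)`, so that `mc − 1 = k̃/(m − k̃)`, the difference of the two sides of
the first inequality is `(m(14m − 36) − k̃(41m + 18)) / (9(m + 2)k̃)`. The denominator is positive, so
the inequality says that the numerator is nonnegative, which is the bound on `k̃` because
`41m + 18 > 0`. -/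

/-- **Coefficient comparison in the gradient-term estimate.** For `m > k̃ > 0` and
`c = 1/(m − k̃)`, the inequality
`2 ≤ (m/(mc−1))(16/(9(m+2)) − c) + (7m−18)/(9(m+2)(mc−1))` holds iff
`k̃ ≤ m(14m−36)/(41m+18)`. -/
theorem coefficient_comparison_gradient_estimate
    (m ktilde c : ℝ) (hk : 0 < ktilde) (hmk : ktilde < m)
    (hc : c = 1 / (m - ktilde)) :
    (2 ≤ (m / (m * c - 1)) * (16 / (9 * (m + 2)) - c)
        + (7 * m - 18) / (9 * (m + 2) * (m * c - 1)))
      ↔ ktilde ≤ m * (14 * m - 36) / (41 * m + 18) := by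
  have hm : 0 < m := hk.trans hmk
  have hd : m - ktilde ≠ 0 := (sub_pos.mpr hmk).ne'
  have hm2 : m + 2 ≠ 0 := by positivity
  have hmc : m * c - 1 = ktilde / (m - ktilde) := by
    rw [hc]
    field_simp
    ring
  have key : (m / (m * c - 1)) * (16 / (9 * (m + 2)) - c)
        + (7 * m - 18) / (9 * (m + 2) * (m * c - 1)) - 2
      = (m * (14 * m - 36) - ktilde * (41 * m + 18)) / (9 * (m + 2) * ktilde) := by
    rw [hmc, hc]
    field_simp
    ring
  rw [← sub_nonneg, key, le_div_iff₀ (by positivity), zero_mul, sub_nonneg,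
    le_div_iff₀ (by positivity)]
end
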